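/- For every η > 0 and H ∈ (0,1) there exists a constant C < ∞ such that for every λ ≥ 1, ∫_{ℝ×ℝ²} |𝐤|⁴ · (η² + ξ² + |𝐤|²)^{−H−3/2} · (1 + λ^{−2}(ξ² + |𝐤|²))^{−2} dξ d𝐤 ≤ C·λ^{4−2H}, where the integration variable is (ξ, 𝐤) ∈ ℝ × ℝ² and |𝐤| denotes the Euclidean norm on ℝ². -/

import Mathlib

open MeasureTheory

/-!
Dropping `η` and replacing `‖ξ‖ ^ 2 + ‖k‖ ^ 2` by the square of the sup norm `‖(ξ, k)‖` only
increases the two negative powers, and `‖k‖ ≤ ‖(ξ, k)‖`. The integrand is thus dominated by the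
radial function `‖x‖ ^ s * (1 + ρ⁻¹ ^ 2 * ‖x‖ ^ 2) ^ q`, and the substitution `x = ρ • y` extracts
exactly the factor `ρ ^ (s + dim)` from its integral. The remaining integral is finite because its
integrand behaves like `‖y‖ ^ s` with `s > -dim` at the origin and like `‖y‖ ^ (s + 2 * q)` with
`s + 2 * q < -dim` at infinity.
-/

open Module Set

section RadialIntegrals

variable {s q : ℝ}

lemma integrableOn_Ioi_rpow_mul_one_add_mul_sq_rpow {c : ℝ} (hc : 0 < c) (hs : -1 < s)
    (hsq : s + 2 * q < -1) :
    IntegrableOn (fun t : ℝ => t ^ s * (1 + c * t ^ 2) ^ q) (Ioi 0) := by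
  have hq : q ≤ 0 := by linarith
  have hmeas : Measurable fun t : ℝ => t ^ s * (1 + c * t ^ 2) ^ q := by fun_prop
  have near_zero : IntegrableOn (fun t : ℝ => t ^ s * (1 + c * t ^ 2) ^ q) (Ioc 0 1) := by
    have hpow : IntegrableOn (fun t : ℝ => t ^ s) (Ioc 0 1) :=
      (intervalIntegrable_iff_integrableOn_Ioc_of_le zero_le_one).1
        (intervalIntegral.intervalIntegrable_rpow' hs)
    refine hpow.mono' hmeas.aestronglyMeasurable ?_
    filter_upwards [ae_restrict_mem measurableSet_Ioc] with t ht
    have ht0 : 0 < t := ht.1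
    rw [Real.norm_of_nonneg (by positivity)]
    refine mul_le_of_le_one_right (by positivity) (Real.rpow_le_one_of_one_le_of_nonpos ?_ hq)
    exact le_add_of_nonneg_right (by positivity)
  have near_infinity : IntegrableOn (fun t : ℝ => t ^ s * (1 + c * t ^ 2) ^ q) (Ioi 1) := by
    have hpow : IntegrableOn (fun t : ℝ => c ^ q * t ^ (s + 2 * q)) (Ioi 1) :=
      (integrableOn_Ioi_rpow_of_lt hsq one_pos).const_mul _
    refine hpow.mono' hmeas.aestronglyMeasurable ?_
    filter_upwards [ae_restrict_mem measurableSet_Ioi] with t ht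
    have ht0 : 0 < t := one_pos.trans ht
    rw [Real.norm_of_nonneg (by positivity)]
    calc t ^ s * (1 + c * t ^ 2) ^ q
        ≤ t ^ s * (c * t ^ 2) ^ q := by
          refine mul_le_mul_of_nonneg_left ?_ (by positivity)
          exact Real.rpow_le_rpow_of_nonpos (by positivity) (by linarith) hq
      _ = c ^ q * t ^ (s + 2 * q) := by
          rw [Real.mul_rpow hc.le (by positivity), Real.rpow_add ht0,
            Real.rpow_mul ht0.le, Real.rpow_two]
          ring
  exact Ioc_union_Ioi_eq_Ioi (zero_le_one (α := ℝ)) ▸ near_zero.union near_infinity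

variable {V : Type*} [NormedAddCommGroup V] [NormedSpace ℝ V] [FiniteDimensional ℝ V]
  [MeasurableSpace V] [BorelSpace V] (μ : Measure V) [μ.IsAddHaarMeasure]

lemma integrable_norm_rpow_mul_one_add_mul_norm_sq_rpow [Nontrivial V] {c : ℝ} (hc : 0 < c)
    (hs : 0 < s + finrank ℝ V) (hsq : s + 2 * q + finrank ℝ V < 0) :
    Integrable (fun x : V => ‖x‖ ^ s * (1 + c * ‖x‖ ^ 2) ^ q) μ := by
  rw [integrable_fun_norm_addHaar μ (f := fun t : ℝ => t ^ s * (1 + c * t ^ 2) ^ q)]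
  have hradial : IntegrableOn
      (fun t : ℝ => t ^ (s + finrank ℝ V - 1) * (1 + c * t ^ 2) ^ q) (Ioi 0) :=
    integrableOn_Ioi_rpow_mul_one_add_mul_sq_rpow hc (by linarith) (by linarith)
  refine hradial.congr_fun (fun t (ht : 0 < t) => ?_) measurableSet_Ioi
  have hexp : s + finrank ℝ V - 1 = ((finrank ℝ V - 1 : ℕ) : ℝ) + s := by
    rw [Nat.cast_pred finrank_pos]
    ring
  simp only [hexp, Real.rpow_add ht, Real.rpow_natCast, smul_eq_mul, mul_assoc]

lemma integral_norm_rpow_mul_one_add_inv_sq_mul_norm_sq_rpow {ρ : ℝ} (hρ : 0 < ρ) :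
    ∫ x : V, ‖x‖ ^ s * (1 + ρ⁻¹ ^ 2 * ‖x‖ ^ 2) ^ q ∂μ =
      ρ ^ (s + finrank ℝ V) * ∫ x : V, ‖x‖ ^ s * (1 + ‖x‖ ^ 2) ^ q ∂μ := by
  have hscale (x : V) : ‖x‖ ^ s * (1 + ρ⁻¹ ^ 2 * ‖x‖ ^ 2) ^ q =
      ρ ^ s * (‖ρ⁻¹ • x‖ ^ s * (1 + ‖ρ⁻¹ • x‖ ^ 2) ^ q) := by
    rw [norm_smul_of_nonneg (inv_nonneg.2 hρ.le), mul_pow, ← mul_assoc,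
      ← Real.mul_rpow hρ.le (by positivity), mul_inv_cancel_left₀ hρ.ne']
  simp only [hscale]
  rw [integral_const_mul, Measure.integral_comp_inv_smul_of_nonneg μ
    (fun x : V => ‖x‖ ^ s * (1 + ‖x‖ ^ 2) ^ q) hρ.le, smul_eq_mul, ← mul_assoc,
    Real.rpow_add_natCast hρ.ne']

end RadialIntegrals

lemma prod_norm_sq_le_add {F E : Type*} [SeminormedAddCommGroup F] [SeminormedAddCommGroup E]
    (x : F × E) : ‖x‖ ^ 2 ≤ ‖x.1‖ ^ 2 + ‖x.2‖ ^ 2 := by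
  rcases max_choice ‖x.1‖ ‖x.2‖ with h | h <;> rw [Prod.norm_def, h]
  · exact le_add_of_nonneg_right (sq_nonneg _)
  · exact le_add_of_nonneg_left (sq_nonneg _)

lemma norm_snd_rpow_mul_add_rpow_mul_one_add_rpow_le {F E : Type*} [NormedAddCommGroup F]
    [NormedAddCommGroup E] {a p q c : ℝ} (ha : 0 ≤ a) (hp : p ≤ 0) (hq : q ≤ 0) (hc : 0 ≤ c)
    (η : ℝ) {x : F × E} (hx : x ≠ 0) :
    ‖x.2‖ ^ a * (η ^ 2 + ‖x.1‖ ^ 2 + ‖x.2‖ ^ 2) ^ p *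
        (1 + c * (‖x.1‖ ^ 2 + ‖x.2‖ ^ 2)) ^ q ≤
      ‖x‖ ^ (a + 2 * p) * (1 + c * ‖x‖ ^ 2) ^ q := by
  have hpos : 0 < ‖x‖ := norm_pos_iff.2 hx
  have hsq : ‖x‖ ^ 2 ≤ ‖x.1‖ ^ 2 + ‖x.2‖ ^ 2 := prod_norm_sq_le_add x
  have houter : (η ^ 2 + ‖x.1‖ ^ 2 + ‖x.2‖ ^ 2) ^ p ≤ (‖x‖ ^ 2) ^ p :=
    Real.rpow_le_rpow_of_nonpos (by positivity) (by linarith [sq_nonneg η]) hp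
  have hinner : (1 + c * (‖x.1‖ ^ 2 + ‖x.2‖ ^ 2)) ^ q ≤ (1 + c * ‖x‖ ^ 2) ^ q :=
    Real.rpow_le_rpow_of_nonpos (by positivity) (by gcongr) hq
  rw [Real.rpow_add hpos, Real.rpow_mul hpos.le, Real.rpow_two]
  gcongr
  exact norm_snd_le x

theorem stmt_3_general {F E : Type*} [NormedAddCommGroup F] [NormedSpace ℝ F]
    [FiniteDimensional ℝ F] [MeasurableSpace F] [BorelSpace F] [NormedAddCommGroup E]
    [NormedSpace ℝ E] [FiniteDimensional ℝ E] [MeasurableSpace E] [BorelSpace E]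
    [Nontrivial (F × E)] (μ : Measure (F × E)) [μ.IsAddHaarMeasure] {a p q : ℝ} (ha : 0 ≤ a)
    (hp : p ≤ 0) (hzero : 0 < a + 2 * p + finrank ℝ (F × E))
    (hinfty : a + 2 * p + 2 * q + finrank ℝ (F × E) < 0) :
    ∃ C : ℝ, 0 ≤ C ∧ ∀ η ρ : ℝ, 0 < ρ →
      ∫⁻ x, ENNReal.ofReal (‖x.2‖ ^ a * (η ^ 2 + ‖x.1‖ ^ 2 + ‖x.2‖ ^ 2) ^ p *
          (1 + ρ⁻¹ ^ 2 * (‖x.1‖ ^ 2 + ‖x.2‖ ^ 2)) ^ q) ∂μ ≤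
        ENNReal.ofReal (C * ρ ^ (a + 2 * p + finrank ℝ (F × E))) := by
  refine ⟨∫ x : F × E, ‖x‖ ^ (a + 2 * p) * (1 + ‖x‖ ^ 2) ^ q ∂μ,
    integral_nonneg fun x => by positivity, fun η ρ hρ => ?_⟩
  -- At the origin `0 ^ y = 0` for `y < 0`, so the pointwise majorant can vanish there.
  have hne : ∀ᵐ x ∂μ, x ≠ 0 := compl_mem_ae_iff.2 (measure_singleton 0)
  calc _ ≤ ∫⁻ x, ENNReal.ofReal (‖x‖ ^ (a + 2 * p) * (1 + ρ⁻¹ ^ 2 * ‖x‖ ^ 2) ^ q) ∂μ := by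
        refine lintegral_mono_ae (hne.mono fun x hx => ENNReal.ofReal_le_ofReal ?_)
        exact norm_snd_rpow_mul_add_rpow_mul_one_add_rpow_le ha hp (by linarith) (sq_nonneg _) η hx
    _ = ENNReal.ofReal (∫ x, ‖x‖ ^ (a + 2 * p) * (1 + ρ⁻¹ ^ 2 * ‖x‖ ^ 2) ^ q ∂μ) :=
        (ofReal_integral_eq_lintegral_ofReal
          (integrable_norm_rpow_mul_one_add_mul_norm_sq_rpow μ (by positivity) hzero hinfty)
          (.of_forall fun x => by positivity)).symm
    _ = _ := by
        rw [integral_norm_rpow_mul_one_add_inv_sq_mul_norm_sq_rpow μ hρ, mul_comm]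

/-- Spectral estimate behind Corollary 1 of the paper: for fixed `η > 0` and `H ∈ (0,1)`
there is a constant `C` such that for all `λ ≥ 1`,
`∫_{ℝ×ℝ²} |𝐤|⁴ (η² + ξ² + |𝐤|²)^{-H-3/2} (1 + λ⁻²(ξ² + |𝐤|²))^{-2} dξ d𝐤 ≤ C λ^{4-2H}`. -/
theorem stmt_3 (η H : ℝ) (hη : 0 < η) (hH : H ∈ Set.Ioo (0 : ℝ) 1) :
    ∃ C : ℝ, 0 ≤ C ∧ ∀ lam : ℝ, 1 ≤ lam →
      (∫⁻ x : ℝ × EuclideanSpace ℝ (Fin 2),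
          ENNReal.ofReal (‖x.2‖ ^ 4 * (η ^ 2 + x.1 ^ 2 + ‖x.2‖ ^ 2) ^ (-H - 3 / 2 : ℝ) *
            (1 + lam⁻¹ ^ 2 * (x.1 ^ 2 + ‖x.2‖ ^ 2)) ^ (-2 : ℝ)))
        ≤ ENNReal.ofReal (C * lam ^ (4 - 2 * H)) := by
  have hdim : (finrank ℝ (ℝ × EuclideanSpace ℝ (Fin 2)) : ℝ) = 3 := by simp
  have hexp : 4 + 2 * (-H - 3 / 2) + 3 = 4 - 2 * H := by ring
  obtain ⟨C, hC, hbound⟩ := stmt_3_general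
    (volume.prod volume : Measure (ℝ × EuclideanSpace ℝ (Fin 2)))
    (a := 4) (p := -H - 3 / 2) (q := -2) (by norm_num) (by linarith [hH.1])
    (by linarith [hH.2]) (by linarith [hH.1])
  refine ⟨C, hC, fun lam hlam => ?_⟩
  simpa only [hdim, hexp, Real.norm_eq_abs, sq_abs, Real.rpow_ofNat, Measure.volume_eq_prod]
    using hbound η lam (one_pos.trans_le hlam)
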